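/- Let f : ℝ^m → ℝ^m be a C^∞ map, let y be the solution of the initial value problem y′(t) = f(y(t)), y(t₀) = y₀, defined on a neighborhood of t₀, and let k ≥ 1 be a natural number. For h > 0 define the Euler iterates y_{j}(h) by y_0(h) = y₀ and y_{j+1}(h) = y_j(h) + h·f(y_j(h)). Then the (k−1)-st forward difference of the values f(y_j(h)) divided by h^{k−1} approximates the k-th derivative of the solution with error O(h): (1/h^{k−1}) · ∑_{j=0}^{k−1} (−1)^j C(k−1,j) f(y_{k−1−j}(h)) − y^{(k)}(t₀) = O(h) as h → 0⁺, i.e. there exist constants C > 0 and h₀ > 0 such that the Euclidean norm of the left-hand side is at most C·h for all 0 < h < h₀. -/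

import Mathlib

open Filter

/-! Let `g (h, x)` be a smooth observable. The difference quotient
`(g (h, x + h • f x) - g (h, x)) / h` along one Euler step extends, by Hadamard's integral formula,
to an observable which is smooth up to and across `h = 0`, where it is the derivative of `g (0, ·)`
along the vector field `f`. Iterating this operation `n` times therefore gives a smooth `G` such
that `G (h, Y h 0)` is the `n`-th forward difference along the Euler iterates divided by `h ^ n`,
while `G (0, y t)` is the `n`-th time derivative along the solution. Differentiability of `G` in
`h` yields the error `O(h)`. -/

universe u

section ParametricIntegral

open MeasureTheory Function
open scoped Topology

variable {H F : Type*} [NormedAddCommGroup H] [NormedSpace ℝ H]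
  [NormedAddCommGroup F] [NormedSpace ℝ F] {μ : Measure ℝ} [IsLocallyFiniteMeasure μ]

lemma exists_eventually_forall_norm_le_of_continuous_uncurry {X Y G : Type*} [TopologicalSpace X]
    [TopologicalSpace Y] [SeminormedAddCommGroup G] {φ : X → Y → G} (hφ : Continuous (uncurry φ))
    {K : Set Y} (hK : IsCompact K) (x₀ : X) :
    ∃ C, ∀ᶠ x in 𝓝 x₀, ∀ s ∈ K, ‖φ x s‖ ≤ C := by
  obtain ⟨C, hC⟩ := hK.exists_bound_of_continuousOn (hφ.uncurry_left x₀).continuousOn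
  refine ⟨C + 1, hK.eventually_forall_of_forall_eventually fun s hs => ?_⟩
  have hlt : ‖uncurry φ (x₀, s)‖ < C + 1 := (hC s hs).trans_lt (lt_add_one C)
  exact (hφ.norm.continuousAt.eventually_lt_const hlt).mono fun _ => le_of_lt

lemma hasFDerivAt_intervalIntegral_of_continuous {φ : H → ℝ → F} {φ' : H → ℝ → H →L[ℝ] F}
    (hφ : ∀ x, Continuous (φ x)) (hφ' : Continuous (uncurry φ'))
    (hderiv : ∀ x s, HasFDerivAt (φ · s) (φ' x s) x) (a b : ℝ) (x₀ : H) :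
    HasFDerivAt (fun x => ∫ s in a..b, φ x s ∂μ) (∫ s in a..b, φ' x₀ s ∂μ) x₀ := by
  obtain ⟨C, hC⟩ :=
    exists_eventually_forall_norm_le_of_continuous_uncurry hφ' (isCompact_uIcc (a := a) (b := b)) x₀
  exact intervalIntegral.hasFDerivAt_integral_of_dominated_of_fderiv_le hC
    (.of_forall fun x => (hφ x).aestronglyMeasurable)
    ((hφ x₀).intervalIntegrable a b)
    (hφ'.uncurry_left x₀).aestronglyMeasurable
    (.of_forall fun s hs x hx => hx s (Set.uIoc_subset_uIcc hs))
    intervalIntegrable_const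
    (.of_forall fun s _ x _ => hderiv x s)

theorem contDiff_intervalIntegral {H : Type u} [NormedAddCommGroup H] [NormedSpace ℝ H]
    [NullSingletonClass μ] {n : ℕ} (a b : ℝ) {F : Type u} [NormedAddCommGroup F] [NormedSpace ℝ F]
    {φ : H → ℝ → F} (hφ : ContDiff ℝ n (uncurry φ)) :
    ContDiff ℝ n (fun x => ∫ s in a..b, φ x s ∂μ) := by
  induction n generalizing F with
  | zero =>
    exact contDiff_zero.2 <|
      intervalIntegral.continuous_parametric_intervalIntegral_of_continuous' hφ.continuous a b
  | succ n ih =>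
    let φ' (x : H) (s : ℝ) : H →L[ℝ] F := fderiv ℝ (uncurry φ) (x, s) ∘L .inl ℝ H ℝ
    have hφ' : ContDiff ℝ n (uncurry φ') :=
      (hφ.fderiv_right le_rfl).clm_comp contDiff_const
    have hderiv (x : H) (s : ℝ) : HasFDerivAt (φ · s) (φ' x s) x := by
      have hφxs : HasFDerivAt (uncurry φ) (fderiv ℝ (uncurry φ) (x, s)) (x, s) :=
        (hφ.differentiable (by simp) (x, s)).hasFDerivAt
      exact hφxs.comp x (f := (·, s)) (hasFDerivAt_prodMk_left x s)
    exact contDiff_succ_iff_hasFDerivAt.2 ⟨_, ih hφ',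
      hasFDerivAt_intervalIntegral_of_continuous (fun x => hφ.continuous.uncurry_left x)
        hφ'.continuous hderiv a b⟩

end ParametricIntegral

/-- The difference quotient `(g (h, x + h • f x) - g (h, x)) / h` of an observable `g` along one
Euler step of size `h` for the vector field `f`. It is encoded by Hadamard's integral formula, which
also gives it the right value at `h = 0`. -/
noncomputable def eulerQuotient {E F : Type*} [NormedAddCommGroup E] [NormedSpace ℝ E]
    [NormedAddCommGroup F] [NormedSpace ℝ F] (f : E → E) (g : ℝ × E → F) (p : ℝ × E) : F :=
  ∫ s in (0 : ℝ)..1, fderiv ℝ g (p.1, p.2 + s • p.1 • f p.2) (0, f p.2)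

section EulerQuotient

open Asymptotics
open scoped Topology

section SingleStep

variable {E F : Type*} [NormedAddCommGroup E] [NormedSpace ℝ E]
  [NormedAddCommGroup F] [NormedSpace ℝ F] [CompleteSpace F] {f : E → E} {g : ℝ × E → F}

lemma smul_eulerQuotient (f : E → E) (hg : ContDiff ℝ 1 g) (h : ℝ) (x : E) :
    h • eulerQuotient f g (h, x) = g (h, x + h • f x) - g (h, x) := by
  have hderiv (s : ℝ) : HasDerivAt (fun s : ℝ => g (h, x + s • h • f x))
      (h • fderiv ℝ g (h, x + s • h • f x) (0, f x)) s := by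
    have hline : HasDerivAt (fun s : ℝ => (h, x + s • h • f x)) (h • (0, f x)) s := by
      simpa using (hasDerivAt_const s h).prodMk
        (((hasDerivAt_id s).smul_const (h • f x)).const_add x)
    rw [← map_smul]
    exact (hg.differentiable one_ne_zero _).hasFDerivAt.comp_hasDerivAt s hline
  have hcont : Continuous fun s : ℝ => h • fderiv ℝ g (h, x + s • h • f x) (0, f x) := by
    have := hg.continuous_fderiv one_ne_zero
    fun_prop
  rw [eulerQuotient, ← intervalIntegral.integral_smul,
    intervalIntegral.integral_eq_sub_of_hasDerivAt (fun s _ => hderiv s)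
      (hcont.intervalIntegrable 0 1)]
  simp

lemma eulerQuotient_zero (f : E → E) (g : ℝ × E → F) (x : E) :
    eulerQuotient f g (0, x) = fderiv ℝ g (0, x) (0, f x) := by
  simp [eulerQuotient]

lemma hasDerivAt_eulerQuotient_zero {y : ℝ → E} {t : ℝ} (hg : DifferentiableAt ℝ g (0, y t))
    (hy : HasDerivAt y (f (y t)) t) :
    HasDerivAt (fun t => g (0, y t)) (eulerQuotient f g (0, y t)) t := by
  rw [eulerQuotient_zero]
  exact hg.hasFDerivAt.comp_hasDerivAt t ((hasDerivAt_const t (0 : ℝ)).prodMk hy)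

end SingleStep

section Iterates

variable {E F : Type u} [NormedAddCommGroup E] [NormedSpace ℝ E]
  [NormedAddCommGroup F] [NormedSpace ℝ F] {f : E → E} {g : ℝ × E → F}

lemma contDiff_eulerQuotient {n : ℕ} (hf : ContDiff ℝ n f) (hg : ContDiff ℝ (n + 1) g) :
    ContDiff ℝ n (eulerQuotient f g) := by
  refine contDiff_intervalIntegral 0 1
    (φ := fun (p : ℝ × E) s => fderiv ℝ g (p.1, p.2 + s • p.1 • f p.2) (0, f p.2)) ?_
  exact ((hg.fderiv_right le_rfl).comp (by fun_prop)).clm_apply (by fun_prop)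

lemma contDiff_iterate_eulerQuotient {r n : ℕ} (hf : ContDiff ℝ (r + n) f)
    (hg : ContDiff ℝ (r + n) g) : ContDiff ℝ r ((eulerQuotient f)^[n] g) := by
  induction n generalizing g with
  | zero => simpa using hg
  | succ n ih =>
    have hf' : ContDiff ℝ (r + n) f := hf.of_le (by gcongr; simp)
    refine ih hf' ?_
    exact_mod_cast contDiff_eulerQuotient (n := r + n) (mod_cast hf') (mod_cast hg)

variable [CompleteSpace F]

lemma pow_smul_iterate_eulerQuotient {n : ℕ} (hf : ContDiff ℝ n f) (hg : ContDiff ℝ n g) {h : ℝ}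
    {Y : ℕ → E} (hY : ∀ j, Y (j + 1) = Y j + h • f (Y j)) (j : ℕ) :
    h ^ n • (eulerQuotient f)^[n] g (h, Y j) = (fwdDiff 1)^[n] (fun i => g (h, Y i)) j := by
  induction n generalizing g with
  | zero => simp
  | succ n ih =>
    have hf' : ContDiff ℝ n f := hf.of_le (by simp)
    have hstep : fwdDiff 1 (fun i => g (h, Y i)) = h • fun i => eulerQuotient f g (h, Y i) := by
      ext i
      simp [fwdDiff, hY, smul_eulerQuotient f (hg.of_le (by simp))]
    rw [Function.iterate_succ_apply, Function.iterate_succ_apply, hstep, fwdDiff_iter_const_smul,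
      Pi.smul_apply, ← ih hf' (contDiff_eulerQuotient hf' hg), pow_succ', mul_smul]

lemma iteratedDeriv_eq_iterate_eulerQuotient_zero {n : ℕ} (hf : ContDiff ℝ n f)
    (hg : ContDiff ℝ n g) {y : ℝ → E} {t₀ : ℝ} (hy : ∀ᶠ t in 𝓝 t₀, HasDerivAt y (f (y t)) t) :
    iteratedDeriv n (fun t => g (0, y t)) t₀ = (eulerQuotient f)^[n] g (0, y t₀) := by
  induction n generalizing g with
  | zero => simp
  | succ n ih =>
    have hf' : ContDiff ℝ n f := hf.of_le (by simp)
    have hderiv : deriv (fun t => g (0, y t)) =ᶠ[𝓝 t₀] fun t => eulerQuotient f g (0, y t) :=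
      hy.mono fun t ht =>
        (hasDerivAt_eulerQuotient_zero (hg.differentiable (by simp) _) ht).deriv
    rw [iteratedDeriv_succ', hderiv.iteratedDeriv_eq, ih hf' (contDiff_eulerQuotient hf' hg),
      Function.iterate_succ_apply]

theorem isBigO_inv_pow_smul_fwdDiff_euler_sub_iteratedDeriv {n : ℕ} {φ : E → F}
    (hf : ContDiff ℝ (n + 1) f) (hφ : ContDiff ℝ (n + 1) φ) {y : ℝ → E} {t₀ : ℝ}
    (hy : ∀ᶠ t in 𝓝 t₀, HasDerivAt y (f (y t)) t) {Y : ℝ → ℕ → E} (hY0 : ∀ h, Y h 0 = y t₀)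
    (hYs : ∀ h j, Y h (j + 1) = Y h j + h • f (Y h j)) :
    (fun h : ℝ => (h ^ n)⁻¹ • (fwdDiff 1)^[n] (fun j => φ (Y h j)) 0 - iteratedDeriv n (φ ∘ y) t₀)
      =O[𝓝[≠] 0] fun h => h := by
  let g (p : ℝ × E) : F := φ p.2
  let G : ℝ × E → F := (eulerQuotient f)^[n] g
  have hg : ContDiff ℝ (n + 1) g := hφ.comp contDiff_snd
  have hfn : ContDiff ℝ n f := hf.of_le (by simp)
  have hgn : ContDiff ℝ n g := hg.of_le (by simp)
  have hG : ContDiff ℝ 1 G := by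
    apply contDiff_iterate_eulerQuotient <;> simpa [add_comm]
  have hGdiff : DifferentiableAt ℝ (fun h => G (h, y t₀)) 0 := by
    have := hG.differentiable one_ne_zero
    fun_prop
  have hO : (fun h => G (h, y t₀) - G (0, y t₀)) =O[𝓝[≠] 0] fun h => h := by
    simpa using hGdiff.isBigO_sub.mono nhdsWithin_le_nhds
  refine hO.congr' ?_ .rfl
  filter_upwards [self_mem_nhdsWithin] with h hh
  have hdiff : (fwdDiff 1)^[n] (fun j => φ (Y h j)) 0 = h ^ n • G (h, y t₀) := by
    rw [← hY0 h, pow_smul_iterate_eulerQuotient hfn hgn (hYs h)]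
  have hsol : iteratedDeriv n (φ ∘ y) t₀ = G (0, y t₀) :=
    iteratedDeriv_eq_iterate_eulerQuotient_zero hfn hgn hy
  rw [hdiff, hsol, inv_smul_smul₀ (pow_ne_zero n hh)]

end Iterates

lemma sum_neg_one_pow_mul_choose_smul_eq_fwdDiff_iter {F : Type*} [AddCommGroup F] [Module ℝ F]
    (u : ℕ → F) (n : ℕ) :
    ∑ j ∈ Finset.range (n + 1), ((-1 : ℝ) ^ j * n.choose j) • u (n - j) = (fwdDiff 1)^[n] u 0 := by
  rw [fwdDiff_iter_eq_sum_shift, ← Finset.sum_range_reflect]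
  refine Finset.sum_congr rfl fun j hj => ?_
  have hjn : j ≤ n := Finset.mem_range_succ_iff.1 hj
  simp [← Int.cast_smul_eq_zsmul ℝ, Nat.choose_symm hjn, Nat.sub_sub_self hjn]

end EulerQuotient

theorem euler_iterates_f_forward_difference_approx_deriv_general
    {E : Type*} [NormedAddCommGroup E] [NormedSpace ℝ E] [CompleteSpace E]
    {f : E → E} {k : ℕ} (hk : 1 ≤ k) (hf : ContDiff ℝ k f)
    {t₀ : ℝ} {y : ℝ → E} (hy : ∀ᶠ t in nhds t₀, HasDerivAt y (f (y t)) t)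
    {Y : ℝ → ℕ → E} (hY0 : ∀ h : ℝ, Y h 0 = y t₀)
    (hYs : ∀ (h : ℝ) (j : ℕ), Y h (j + 1) = Y h j + h • f (Y h j)) :
    ∃ C > (0 : ℝ), ∃ h₀ > (0 : ℝ), ∀ h : ℝ, 0 < h → h < h₀ →
      ‖(h ^ (k - 1))⁻¹ • ∑ j ∈ Finset.range k,
          ((-1 : ℝ) ^ j * ((k - 1).choose j)) • f (Y h (k - 1 - j))
        - iteratedDeriv k y t₀‖ ≤ C * h := by
  obtain ⟨n, rfl⟩ := Nat.exists_eq_add_of_le' hk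
  have hO := isBigO_inv_pow_smul_fwdDiff_euler_sub_iteratedDeriv (mod_cast hf) (mod_cast hf)
    hy hY0 hYs
  obtain ⟨C, hC, hbound⟩ := (hO.mono (nhdsGT_le_nhdsNE 0)).exists_pos
  obtain ⟨h₀, hh₀, hsub⟩ := mem_nhdsGT_iff_exists_Ioo_subset.1 hbound.bound
  have hderiv : deriv y =ᶠ[nhds t₀] f ∘ y := hy.mono fun t ht => ht.deriv
  refine ⟨C, hC, h₀, hh₀, fun h hpos hlt => ?_⟩
  rw [Nat.add_sub_cancel, sum_neg_one_pow_mul_choose_smul_eq_fwdDiff_iter (fun j => f (Y h j)),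
    iteratedDeriv_succ', hderiv.iteratedDeriv_eq]
  simpa [abs_of_pos hpos] using hsub ⟨hpos, hlt⟩

/-- Strategy (b): the `(k-1)`-st forward difference of the vector-field values along the
explicit Euler iterates with stepsize `h`, divided by `h ^ (k-1)`, approximates the `k`-th
derivative of the solution of `y' = f(y)`, `y t₀ = y₀`, with error `O(h)` as `h → 0⁺`. -/
theorem euler_iterates_f_forward_difference_approx_deriv
    (m : ℕ) (f : EuclideanSpace ℝ (Fin m) → EuclideanSpace ℝ (Fin m))
    (hf : ContDiff ℝ (⊤ : ℕ∞) f)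
    (t₀ : ℝ) (y₀ : EuclideanSpace ℝ (Fin m)) (y : ℝ → EuclideanSpace ℝ (Fin m))
    (hy0 : y t₀ = y₀)
    (hy : ∀ᶠ t in nhds t₀, HasDerivAt y (f (y t)) t)
    (k : ℕ) (hk : 1 ≤ k)
    (Y : ℝ → ℕ → EuclideanSpace ℝ (Fin m))
    (hY0 : ∀ h : ℝ, Y h 0 = y₀)
    (hYs : ∀ (h : ℝ) (j : ℕ), Y h (j + 1) = Y h j + h • f (Y h j)) :
    ∃ C > (0 : ℝ), ∃ h₀ > (0 : ℝ), ∀ h : ℝ, 0 < h → h < h₀ →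
      ‖(h ^ (k - 1))⁻¹ • ∑ j ∈ Finset.range k,
          ((-1 : ℝ) ^ j * ((k - 1).choose j)) • f (Y h (k - 1 - j))
        - iteratedDeriv k y t₀‖ ≤ C * h :=
  euler_iterates_f_forward_difference_approx_deriv_general hk (contDiff_infty.1 hf k) hy
    (hy0 ▸ hY0) hYs
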